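/- Let V₁ and V₂ be contractions on a complex Hilbert space H. Then the operator M on H ⊕ H given by the block matrix [[V₁V₂, V₁(I − V₂V₂*)^{1/2}], [0, 0]], i.e., (x, y) ↦ (V₁V₂ x + V₁(I − V₂V₂*)^{1/2} y, 0), is a partial isometry if and only if V₁ is a partial isometry. -/

import Mathlib

open ContinuousLinearMap

/-- A bounded operator `V` on a Hilbert space is a partial isometry if it is isometric
on the orthogonal complement of its kernel. -/
def IsPartialIsometry {H : Type*} [NormedAddCommGroup H] [InnerProductSpace ℂ H]
    [CompleteSpace H] (V : H →L[ℂ] H) : Prop :=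
  ∀ x ∈ (LinearMap.ker (V : H →ₗ[ℂ] H))ᗮ, ‖V x‖ = ‖x‖

/-!
Put `S = (1 - V₂V₂†)^{1/2}`. The row `R = [V₂ S]` satisfies `RR† = V₂V₂† + S² = 1`, and
`‖M p‖ = ‖V₁ R p‖` for all `p`, so `M` is a partial isometry if and only if `T = V₁R` is one.
Since `TT†T = V₁RR†V₁†V₁R = V₁V₁†V₁R` and `R` is right invertible, `TT†T = T` if and only if
`V₁V₁†V₁ = V₁`.
-/

section Operators

open scoped InnerProduct

variable {𝕜 E F G : Type*} [RCLike 𝕜]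
  [NormedAddCommGroup E] [InnerProductSpace 𝕜 E]
  [NormedAddCommGroup F] [InnerProductSpace 𝕜 F]
  [NormedAddCommGroup G] [InnerProductSpace 𝕜 G]

/-- Partial isometries between possibly different inner product spaces: operators that are isometric
on the orthogonal complement of their kernel. On a single complex Hilbert space this unfolds to
`IsPartialIsometry`. -/
def IsPartialIsometryBetween (V : E →L[𝕜] F) : Prop :=
  ∀ x ∈ V.kerᗮ, ‖V x‖ = ‖x‖

theorem isPartialIsometryBetween_congr_norm {V : E →L[𝕜] F} {W : E →L[𝕜] G}
    (h : ∀ x, ‖V x‖ = ‖W x‖) :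
    IsPartialIsometryBetween V ↔ IsPartialIsometryBetween W := by
  have hker : V.ker = W.ker := by
    ext x
    rw [LinearMap.mem_ker, LinearMap.mem_ker, coe_coe, coe_coe, ← norm_eq_zero, h, norm_eq_zero]
  simp only [IsPartialIsometryBetween, hker, h]

/-- The row operator `[A B] : (x, y) ↦ A x + B y` on the Hilbert sum of the two domains. -/
noncomputable def rowOperator (A : E →L[𝕜] G) (B : F →L[𝕜] G) : WithLp 2 (E × F) →L[𝕜] G :=
  A ∘L WithLp.fstL 2 𝕜 E F + B ∘L WithLp.sndL 2 𝕜 E F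

theorem rowOperator_apply (A : E →L[𝕜] G) (B : F →L[𝕜] G) (p : WithLp 2 (E × F)) :
    rowOperator A B p = A p.fst + B p.snd :=
  rfl

variable [CompleteSpace E] [CompleteSpace F] [CompleteSpace G]

theorem adjoint_apply_mem_orthogonal_ker (V : E →L[𝕜] F) (y : F) : (V†) y ∈ V.kerᗮ := by
  rw [V.orthogonal_ker]
  exact subset_closure ⟨y, rfl⟩

theorem isPartialIsometryBetween_iff_adjoint_apply_apply {V : E →L[𝕜] F} :
    IsPartialIsometryBetween V ↔ ∀ x ∈ V.kerᗮ, (V†) (V x) = x := by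
  calc
    IsPartialIsometryBetween V ↔ ∀ x : V.kerᗮ, ‖(V ∘L V.kerᗮ.subtypeL) x‖ = ‖x‖ := by
      simp [IsPartialIsometryBetween]
    _ ↔ V.kerᗮ.orthogonalProjectionOnto ∘L V† ∘L V ∘L V.kerᗮ.subtypeL = 1 := by
      rw [norm_map_iff_adjoint_comp_self, adjoint_comp, Submodule.adjoint_subtypeL]
      rfl
    _ ↔ ∀ x ∈ V.kerᗮ, (V†) (V x) = x := by
      simp [ContinuousLinearMap.ext_iff, Subtype.ext_iff,
        Submodule.starProjection_eq_self_iff.mpr (adjoint_apply_mem_orthogonal_ker V _)]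

theorem isPartialIsometryBetween_iff_comp_adjoint_comp {V : E →L[𝕜] F} :
    IsPartialIsometryBetween V ↔ V ∘L V† ∘L V = V := by
  rw [isPartialIsometryBetween_iff_adjoint_apply_apply]
  constructor
  · intro h
    ext x
    obtain ⟨k, hk, y, hy, rfl⟩ := V.ker.exists_add_mem_mem_orthogonal x
    have hVk : V k = 0 := hk
    simp [hVk, h y hy]
  · intro h x hx
    have hker : (V†) (V x) - x ∈ V.ker := by
      simpa [sub_eq_zero] using congr($h x)
    have horth : (V†) (V x) - x ∈ V.kerᗮ :=
      sub_mem (adjoint_apply_mem_orthogonal_ker V _) hx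
    exact sub_eq_zero.mp (Submodule.disjoint_def.mp V.ker.orthogonal_disjoint _ hker horth)

theorem isPartialIsometryBetween_comp_iff {V : F →L[𝕜] G} {R : E →L[𝕜] F}
    (hR : R ∘L R† = 1) :
    IsPartialIsometryBetween (V ∘L R) ↔ IsPartialIsometryBetween V := by
  have hRR (y : F) : R ((R†) y) = y := congr($hR y)
  have hsurj : Function.Surjective R := fun y ↦ ⟨(R†) y, hRR y⟩
  have htriple : (V ∘L R) ∘L (V ∘L R)† ∘L (V ∘L R) = (V ∘L V† ∘L V) ∘L R := by
    ext x
    simp [adjoint_comp, hRR]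
  rw [isPartialIsometryBetween_iff_comp_adjoint_comp,
    isPartialIsometryBetween_iff_comp_adjoint_comp, htriple]
  exact ⟨fun h ↦ ContinuousLinearMap.ext (hsurj.forall.mpr fun x ↦ congr($h x)),
    fun h ↦ by rw [h]⟩

theorem comp_adjoint_le_one {A : E →L[𝕜] F} (hA : ‖A‖ ≤ 1) : A ∘L A† ≤ 1 := by
  rw [le_def, isPositive_def']
  refine ⟨IsSelfAdjoint.one _ |>.sub (isPositive_self_comp_adjoint A).isSelfAdjoint, fun x ↦ ?_⟩
  have hAx : ‖(A†) x‖ ≤ ‖x‖ := by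
    simpa using (A†).le_of_opNorm_le ((adjoint.norm_map A).trans_le hA) x
  calc
    0 ≤ ‖x‖ ^ 2 - ‖(A†) x‖ ^ 2 := sub_nonneg.mpr (by gcongr)
    _ = (1 - A ∘L A†).reApplyInnerSelf x := by
      simp [reApplyInnerSelf_apply, inner_sub_left, ← adjoint_inner_right]

theorem adjoint_rowOperator_apply (A : E →L[𝕜] G) (B : F →L[𝕜] G) (z : G) :
    ((rowOperator A B)†) z = WithLp.toLp 2 ((A†) z, (B†) z) := by
  refine ext_inner_left 𝕜 fun p ↦ ?_
  rw [adjoint_inner_right, rowOperator_apply, inner_add_left, WithLp.prod_inner_apply,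
    adjoint_inner_right, adjoint_inner_right]
  rfl

theorem rowOperator_comp_adjoint (A : E →L[𝕜] G) (B : F →L[𝕜] G) :
    rowOperator A B ∘L (rowOperator A B)† = A ∘L A† + B ∘L B† := by
  ext z
  rw [comp_apply, adjoint_rowOperator_apply, rowOperator_apply]
  rfl

end Operators

section Dilation

open scoped InnerProduct

variable {G H K L : Type*}
  [NormedAddCommGroup G] [InnerProductSpace ℂ G] [CompleteSpace G]
  [NormedAddCommGroup H] [InnerProductSpace ℂ H] [CompleteSpace H]
  [NormedAddCommGroup K] [InnerProductSpace ℂ K] [CompleteSpace K]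
  [NormedAddCommGroup L] [InnerProductSpace ℂ L]

/-- The defect operator `(1 - AA†)^{1/2}` of the adjoint of a contraction `A`. Without
`‖A‖ ≤ 1` the radicand need not be positive, and `CFC.sqrt` may then take its junk value `0`. -/
noncomputable def adjointDefect (A : K →L[ℂ] H) : H →L[ℂ] H :=
  CFC.sqrt (1 - A ∘L A†)

theorem adjointDefect_comp_adjoint {A : K →L[ℂ] H} (hA : ‖A‖ ≤ 1) :
    adjointDefect A ∘L (adjointDefect A)† = 1 - A ∘L A† := by
  have hself : (adjointDefect A)† = adjointDefect A :=
    (IsSelfAdjoint.of_nonneg (CFC.sqrt_nonneg _)).star_eq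
  rw [hself]
  exact CFC.sqrt_mul_sqrt_self _ (sub_nonneg.mpr (comp_adjoint_le_one hA))

theorem rowOperator_adjointDefect_comp_adjoint {A : K →L[ℂ] H} (hA : ‖A‖ ≤ 1) :
    rowOperator A (adjointDefect A) ∘L (rowOperator A (adjointDefect A))† = 1 := by
  rw [rowOperator_comp_adjoint, adjointDefect_comp_adjoint hA, add_sub_cancel]

theorem stmt_9_general (V₁ : H →L[ℂ] G) (V₂ : K →L[ℂ] H) (hV₂ : ‖V₂‖ ≤ 1)
    (M : WithLp 2 (K × H) →L[ℂ] WithLp 2 (G × L))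
    (hM : ∀ x y, M (WithLp.toLp 2 (x, y)) =
      WithLp.toLp 2 (V₁ (V₂ x) + V₁ (adjointDefect V₂ y), 0)) :
    IsPartialIsometryBetween M ↔ IsPartialIsometryBetween V₁ := by
  have hnorm (p : WithLp 2 (K × H)) : ‖M p‖ = ‖(V₁ ∘L rowOperator V₂ (adjointDefect V₂)) p‖ := by
    calc
      ‖M p‖ = ‖WithLp.toLp 2 (V₁ (rowOperator V₂ (adjointDefect V₂) p), (0 : L))‖ := by
        rw [rowOperator_apply, map_add]
        exact congrArg norm (hM p.fst p.snd)
      _ = ‖(V₁ ∘L rowOperator V₂ (adjointDefect V₂)) p‖ := by simp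
  rw [isPartialIsometryBetween_congr_norm hnorm,
    isPartialIsometryBetween_comp_iff (rowOperator_adjointDefect_comp_adjoint hV₂)]

end Dilation

theorem stmt_9 {H : Type*} [NormedAddCommGroup H] [InnerProductSpace ℂ H] [CompleteSpace H]
    (V₁ V₂ : H →L[ℂ] H) (hcontr₁ : ‖V₁‖ ≤ 1) (hcontr₂ : ‖V₂‖ ≤ 1)
    (M : WithLp 2 (H × H) →L[ℂ] WithLp 2 (H × H))
    (hM : ∀ x y : H,
      M ((WithLp.equiv 2 (H × H)).symm (x, y)) =
        (WithLp.equiv 2 (H × H)).symm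
          (V₁ (V₂ x) + V₁ (CFC.sqrt (1 - V₂ * adjoint V₂) y), 0)) :
    IsPartialIsometry M ↔ IsPartialIsometry V₁ :=
  stmt_9_general V₁ V₂ hcontr₂ M hM
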